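/- Let k be a field, q ∈ k with q ≠ 0, and let R̂ be the 4×4 matrix over k (rows/columns indexed by pairs ordered 11,12,21,22) R̂ = [[q,0,0,0],[0,0,1,0],[0,1,q−q⁻¹,0],[0,0,0,q]]. Let A be an associative unital k-algebra and L a 2×2 matrix over A with entries l₁₁, l₁₂, l₂₁, l₂₂ satisfying the reflection equation R̂L₁R̂L₁ = L₁R̂L₁R̂, where L₁ = L ⊗ I₂. Then the quantum trace ℓ := q²·l₁₁ + l₂₂ is central among the generators: ℓ commutes with each of l₁₁, l₁₂, l₂₁, l₂₂ in A. -/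

import Mathlib

/-- The standard Hecke symmetry of `U_q(sl(2))` in braid form, as a matrix indexed by
pairs `(i,j)`, `i,j ∈ {0,1}`, ordered `(00,01,10,11)`:
`R̂ = [[q,0,0,0],[0,0,1,0],[0,1,q−q⁻¹,0],[0,0,0,q]]`. -/
def Rhat {k : Type*} [Field k] (q : k) : Matrix (Fin 2 × Fin 2) (Fin 2 × Fin 2) k :=
  Matrix.of fun p r =>
    if p.1 = p.2 ∧ r = p then q
    else if p = (0, 1) ∧ r = (1, 0) then 1
    else if p = (1, 0) ∧ r = (0, 1) then 1
    else if p = (1, 0) ∧ r = (1, 0) then q - q⁻¹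
    else 0

/- Write `L₁ = L ⊗ 1` and let `Tr_D X = Tr (D X)`. The reflection equation is equivalent to
`L₁ (R L₁ R⁻¹) = (R⁻¹ L₁ R) L₁`. If `Tr_D`, taken over the second tensor factor only, sends both
`R X₁ R⁻¹` and `R⁻¹ X₁ R` to `Tr_D(X) · 1`, then applying it to the two sides gives
`L Tr_D(L) = Tr_D(L) L`. For the standard Hecke symmetry, `D = diag(q², 1)` has this property. -/

open Matrix
open scoped Kronecker

section PartialTrace

variable {k A l m n : Type*} [CommSemiring k] [Semiring A] [Algebra k A]

lemma map_algebraMap_kronecker_one [DecidableEq n] (X : Matrix l m k) :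
    (X ⊗ₖ (1 : Matrix n n k)).map (algebraMap k A) = X.map (algebraMap k A) ⊗ₖ 1 := by
  ext
  simp [one_apply, apply_ite (algebraMap k A)]

variable [Fintype n]

lemma map_algebraMap_mul_smul (M : Matrix l n k) (a : A) (N : Matrix n m A) :
    M.map (algebraMap k A) * (a • N) = a • (M.map (algebraMap k A) * N) := by
  ext i j
  simp only [mul_apply, map_apply, Matrix.smul_apply, smul_eq_mul, Finset.mul_sum,
    Algebra.left_comm]

/-- The trace `X ↦ Tr (D X)` weighted by a scalar matrix `D`; a suitable `D` makes it the
quantum trace attached to a Hecke symmetry. -/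
def quantumTrace (D : Matrix n n k) : Matrix n n A →ₗ[k] A :=
  traceLinearMap n k A ∘ₗ LinearMap.mulLeft k (D.map (algebraMap k A))

lemma quantumTrace_apply (D : Matrix n n k) (X : Matrix n n A) :
    quantumTrace D X = (D.map (algebraMap k A) * X).trace := rfl

lemma quantumTrace_smul (D : Matrix n n k) (a : A) (X : Matrix n n A) :
    quantumTrace D (a • X) = a * quantumTrace D X := by
  simp only [quantumTrace_apply, map_algebraMap_mul_smul, trace_smul, smul_eq_mul]

lemma quantumTrace_op_smul (D : Matrix n n k) (a : A) (X : Matrix n n A) :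
    quantumTrace D (MulOpposite.op a • X) = quantumTrace D X * a := by
  simp only [quantumTrace_apply, Matrix.mul_smul, trace_smul, MulOpposite.smul_eq_mul_unop,
    MulOpposite.unop_op]

lemma quantumTrace_map_algebraMap (D X : Matrix n n k) :
    quantumTrace D (X.map (algebraMap k A)) = algebraMap k A (quantumTrace D X) := by
  simp [quantumTrace_apply, ← Matrix.map_mul, Algebra.algebraMap_self, AddMonoidHom.map_trace]

/-- The quantum trace over the second tensor factor, `Tr₍₂₎ (D₂ X)`. -/
def partialQuantumTrace (D : Matrix n n k) :
    Matrix (m × n) (m × n) A →ₗ[k] Matrix m m A where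
  toFun X := of fun i j => quantumTrace D (X.submatrix (Prod.mk i) (Prod.mk j))
  map_add' X Y := by ext; simp [submatrix_add]
  map_smul' c X := by ext; simp [submatrix_smul]

lemma partialQuantumTrace_apply (D : Matrix n n k) (X : Matrix (m × n) (m × n) A) (i j : m) :
    partialQuantumTrace D X i j = quantumTrace D (X.submatrix (Prod.mk i) (Prod.mk j)) := rfl

lemma partialQuantumTrace_kronecker_one_mul [Fintype m] [DecidableEq n]
    (D : Matrix n n k) (L : Matrix m m A) (X : Matrix (m × n) (m × n) A) :
    partialQuantumTrace D ((L ⊗ₖ 1) * X) = L * partialQuantumTrace D X := by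
  ext i j
  have hblock : ((L ⊗ₖ 1) * X).submatrix (Prod.mk i) (Prod.mk j) =
      ∑ c, L i c • X.submatrix (Prod.mk c) (Prod.mk j) := by
    ext a b
    simp [mul_apply, Fintype.sum_prod_type, one_apply, Matrix.sum_apply]
  simp only [partialQuantumTrace_apply, hblock, map_sum, quantumTrace_smul, mul_apply]

lemma partialQuantumTrace_mul_kronecker_one [Fintype m] [DecidableEq n]
    (D : Matrix n n k) (L : Matrix m m A) (X : Matrix (m × n) (m × n) A) :
    partialQuantumTrace D (X * (L ⊗ₖ 1)) = partialQuantumTrace D X * L := by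
  ext i j
  have hblock : (X * (L ⊗ₖ 1)).submatrix (Prod.mk i) (Prod.mk j) =
      ∑ c, MulOpposite.op (L c j) • X.submatrix (Prod.mk i) (Prod.mk c) := by
    ext a b
    simp [mul_apply, Fintype.sum_prod_type, one_apply, Matrix.sum_apply]
  simp only [partialQuantumTrace_apply, hblock, map_sum, quantumTrace_op_smul, mul_apply]

lemma partialQuantumTrace_smul (D : Matrix n n k) (a : A) (X : Matrix (m × n) (m × n) A) :
    partialQuantumTrace D (a • X) = a • partialQuantumTrace D X := by
  ext i j
  exact quantumTrace_smul D a _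

lemma partialQuantumTrace_map_algebraMap (D : Matrix n n k) (X : Matrix (m × n) (m × n) k) :
    partialQuantumTrace D (X.map (algebraMap k A)) =
      (partialQuantumTrace D X).map (algebraMap k A) := by
  ext i j
  exact quantumTrace_map_algebraMap D _

lemma partialQuantumTrace_mul_kronecker_one_mul_baseChange [DecidableEq n]
    {D : Matrix n n k} {R S : Matrix (n × n) (n × n) k}
    (h : ∀ X : Matrix n n k, partialQuantumTrace D (R * (X ⊗ₖ 1) * S) =
      scalar n (quantumTrace D X)) (X : Matrix n n A) :
    partialQuantumTrace D (R.map (algebraMap k A) * (X ⊗ₖ 1) * S.map (algebraMap k A)) =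
      scalar n (quantumTrace D X) := by
  induction X using Matrix.induction_on' with
  | h_zero => simp
  | h_add X Y hX hY => simp only [add_kronecker, mul_add, add_mul, map_add, hX, hY]
  | h_std_basis i j a =>
    have hsingle : single i j a = a • (single i j (1 : k)).map (algebraMap k A) := by
      simp [smul_single]
    rw [hsingle, smul_kronecker, ← map_algebraMap_kronecker_one, map_algebraMap_mul_smul, smul_mul,
      partialQuantumTrace_smul, ← Matrix.map_mul, ← Matrix.map_mul,
      partialQuantumTrace_map_algebraMap, h, quantumTrace_smul, quantumTrace_map_algebraMap]
    ext; simp [diagonal_apply]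

end PartialTrace

lemma mul_conj_eq_inv_conj_mul_of_reflection {M : Type*} [Monoid M] {r s x : M}
    (hsr : s * r = 1) (hrs : r * s = 1) (h : r * x * r * x = x * r * x * r) :
    x * (r * x * s) = s * x * r * x :=
  calc x * (r * x * s) = s * (r * x * r * x) * s := by simp [← mul_assoc, hsr]
    _ = s * (x * r * x * r) * s := by rw [h]
    _ = s * x * r * x := by simp [mul_assoc, hrs]

section ReflectionEquation

variable {k A n : Type*} [CommRing k] [Semiring A] [Algebra k A] [Fintype n] [DecidableEq n]

/-- `Tr (D ·)` is a quantum trace for `R`: its partial version sends `R^{±1} X₁ R^{∓1}` to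
`Tr (D X) · 1`. Here `X` has entries in `k`, so that the notion does not refer to the algebra
generated by the entries of a solution `L` of the reflection equation. The field `isUnit` excludes
the junk value `R⁻¹ = 0`. -/
structure IsQuantumTraceWeight (D : Matrix n n k) (R : Matrix (n × n) (n × n) k) : Prop where
  isUnit : IsUnit R
  partialQuantumTrace_conj (X : Matrix n n k) :
    partialQuantumTrace D (R * (X ⊗ₖ 1) * R⁻¹) = scalar n (quantumTrace D X)
  partialQuantumTrace_inv_conj (X : Matrix n n k) :
    partialQuantumTrace D (R⁻¹ * (X ⊗ₖ 1) * R) = scalar n (quantumTrace D X)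

theorem stmt11_general {D : Matrix n n k} {R : Matrix (n × n) (n × n) k}
    (hD : IsQuantumTraceWeight D R) {L : Matrix n n A}
    (hRE : R.map (algebraMap k A) * (L ⊗ₖ 1) * R.map (algebraMap k A) * (L ⊗ₖ 1) =
      (L ⊗ₖ 1) * R.map (algebraMap k A) * (L ⊗ₖ 1) * R.map (algebraMap k A)) (i j : n) :
    quantumTrace D L * L i j = L i j * quantumTrace D L := by
  have hdet : IsUnit R.det := (isUnit_iff_isUnit_det R).mp hD.isUnit
  have hinv_mul : R⁻¹.map (algebraMap k A) * R.map (algebraMap k A) = 1 := by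
    simp [← Matrix.map_mul, nonsing_inv_mul R hdet]
  have hmul_inv : R.map (algebraMap k A) * R⁻¹.map (algebraMap k A) = 1 := by
    simp [← Matrix.map_mul, mul_nonsing_inv R hdet]
  have hconj := congrArg (partialQuantumTrace D)
    (mul_conj_eq_inv_conj_mul_of_reflection hinv_mul hmul_inv hRE)
  rw [partialQuantumTrace_kronecker_one_mul, partialQuantumTrace_mul_kronecker_one,
    partialQuantumTrace_mul_kronecker_one_mul_baseChange hD.partialQuantumTrace_conj,
    partialQuantumTrace_mul_kronecker_one_mul_baseChange hD.partialQuantumTrace_inv_conj] at hconj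
  have hentry := congrFun₂ hconj i j
  simpa [scalar_apply] using hentry.symm

end ReflectionEquation

namespace Rhat

variable {k : Type*} [Field k] {q : k}

lemma mul_self (hq : q ≠ 0) : Rhat q * Rhat q = (q - q⁻¹) • Rhat q + 1 := by
  ext ⟨i, a⟩ ⟨j, b⟩
  fin_cases i <;> fin_cases a <;> fin_cases j <;> fin_cases b <;>
    simp [Rhat, mul_apply, Fintype.sum_prod_type] <;> field_simp <;> ring

lemma mul_sub_smul_one (hq : q ≠ 0) : Rhat q * (Rhat q - (q - q⁻¹) • 1) = 1 := by
  simp [mul_sub, mul_self hq]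

lemma inv_eq (hq : q ≠ 0) : (Rhat q)⁻¹ = Rhat q - (q - q⁻¹) • 1 :=
  inv_eq_right_inv (mul_sub_smul_one hq)

/-- The matrix `D = diag(q², 1)` defining the quantum trace `q² l₁₁ + l₂₂` of `U_q(sl(2))`. -/
def traceWeight (q : k) : Matrix (Fin 2) (Fin 2) k :=
  diagonal ![q ^ 2, 1]

lemma quantumTrace_traceWeight {A : Type*} [Semiring A] [Algebra k A]
    (X : Matrix (Fin 2) (Fin 2) A) :
    quantumTrace (traceWeight q) X = q ^ 2 • X 0 0 + X 1 1 := by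
  simp [quantumTrace_apply, traceWeight, trace_fin_two, mul_apply, diagonal_apply,
    Algebra.smul_def]

lemma partialQuantumTrace_traceWeight (hq : q ≠ 0) :
    partialQuantumTrace (traceWeight q) (Rhat q) = scalar (Fin 2) (q ^ 3) := by
  ext i j
  fin_cases i <;> fin_cases j <;>
    simp [Rhat, partialQuantumTrace_apply, quantumTrace_traceWeight] <;> grind

lemma partialQuantumTrace_conj (hq : q ≠ 0) (X : Matrix (Fin 2) (Fin 2) k) :
    partialQuantumTrace (traceWeight q) (Rhat q * (X ⊗ₖ 1) * (Rhat q)⁻¹) =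
      scalar (Fin 2) (quantumTrace (traceWeight q) X) := by
  rw [inv_eq hq]
  ext i j
  fin_cases i <;> fin_cases j <;>
    simp [Rhat, partialQuantumTrace_apply, quantumTrace_traceWeight, mul_apply,
      Fintype.sum_prod_type, one_apply] <;>
    grind

lemma partialQuantumTrace_inv_conj (hq : q ≠ 0) (X : Matrix (Fin 2) (Fin 2) k) :
    partialQuantumTrace (traceWeight q) ((Rhat q)⁻¹ * (X ⊗ₖ 1) * Rhat q) =
      scalar (Fin 2) (quantumTrace (traceWeight q) X) := by
  have hexchange : (Rhat q)⁻¹ * (X ⊗ₖ 1) * Rhat q = Rhat q * (X ⊗ₖ 1) * (Rhat q)⁻¹ +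
      (q - q⁻¹) • (Rhat q * (X ⊗ₖ 1) - (X ⊗ₖ 1) * Rhat q) := by
    rw [inv_eq hq]
    simp only [sub_mul, mul_sub, smul_mul, Matrix.mul_smul, one_mul, mul_one, smul_sub]
    abel
  have hcomm : partialQuantumTrace (traceWeight q) (Rhat q * (X ⊗ₖ 1)) =
      partialQuantumTrace (traceWeight q) ((X ⊗ₖ 1) * Rhat q) := by
    rw [partialQuantumTrace_mul_kronecker_one, partialQuantumTrace_kronecker_one_mul,
      partialQuantumTrace_traceWeight hq]
    exact scalar_commute _ (fun _ => Commute.all _ _) X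
  rw [hexchange, map_add, map_smul, map_sub, hcomm, sub_self, smul_zero, add_zero,
    partialQuantumTrace_conj hq]

lemma isQuantumTraceWeight (hq : q ≠ 0) : IsQuantumTraceWeight (traceWeight q) (Rhat q) where
  isUnit := .of_mul_eq_one _ (mul_sub_smul_one hq)
  partialQuantumTrace_conj := partialQuantumTrace_conj hq
  partialQuantumTrace_inv_conj := partialQuantumTrace_inv_conj hq

end Rhat

/-- if the `2×2` matrix `L = (l_i^j)` over `A` satisfies the reflection
equation `R̂L₁R̂L₁ = L₁R̂L₁R̂` (`L₁ = L ⊗ I₂`), then the quantum trace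
`ℓ = q²·l₁₁ + l₂₂` commutes with every entry of `L`. -/
theorem stmt11 {k A : Type*} [Field k] [Ring A] [Algebra k A]
    (q : k) (hq : q ≠ 0)
    (L : Matrix (Fin 2) (Fin 2) A)
    (hRE : ((Rhat q).map (algebraMap k A)) *
        (Matrix.kroneckerMap (· * ·) L (1 : Matrix (Fin 2) (Fin 2) A)) *
        ((Rhat q).map (algebraMap k A)) *
        (Matrix.kroneckerMap (· * ·) L (1 : Matrix (Fin 2) (Fin 2) A)) =
        (Matrix.kroneckerMap (· * ·) L (1 : Matrix (Fin 2) (Fin 2) A)) *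
        ((Rhat q).map (algebraMap k A)) *
        (Matrix.kroneckerMap (· * ·) L (1 : Matrix (Fin 2) (Fin 2) A)) *
        ((Rhat q).map (algebraMap k A))) :
    ∀ i j : Fin 2,
      ((q ^ 2) • L 0 0 + L 1 1) * L i j = L i j * ((q ^ 2) • L 0 0 + L 1 1) := by
  intro i j
  simpa only [Rhat.quantumTrace_traceWeight] using
    stmt11_general (Rhat.isQuantumTraceWeight hq) hRE i j
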